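/- Let d ≥ 1, D ≥ 3 and e be integers with 1 ≤ e ≤ D and e ∣ D, assume (D−2)(d−1) + D/e ≥ 2, and let A ⊆ ℕ^d be of one-singular-point type for D and e. Set t₀ := (D−2)(d−1) + D/e − 2 and s₀ := (D/e)·t₀. Then the hole set H := ℕ_e^d \ ⟨A⟩ satisfies H ⊆ Δ_{t₀,e}, and sA = Δ_{s,e} \ H for every natural number s ≥ s₀. -/

import Mathlib

open Pointwise

/-- The `s`-fold sumset of `A`: `0A = {0}` and `(s+1)A = A + sA`. -/
def sumset {M : Type*} [AddMonoid M] (A : Set M) : ℕ → Set M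
  | 0 => {0}
  | s + 1 => A + sumset A s

/-- `ℕ_e^d = {y ∈ ℕ^d : e ∣ |y|}`. -/
def NatE (d e : ℕ) : Set (Fin d → ℕ) := {y | e ∣ ∑ j, y j}

/-- `Δ_{s,e} = {y ∈ ℕ_e^d : |y| ≤ sD}`. -/
def DeltaE (d D e s : ℕ) : Set (Fin d → ℕ) := {y | e ∣ ∑ j, y j ∧ ∑ j, y j ≤ s * D}

/-- The hole set `H = ℕ_e^d \ ⟨A⟩`, where `⟨A⟩` is the additive submonoid generated by `A`. -/
def Holes (d e : ℕ) (A : Set (Fin d → ℕ)) : Set (Fin d → ℕ) :=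
  NatE d e \ (AddSubmonoid.closure A : Set (Fin d → ℕ))

/-- The set `{0, Dε₁, …, Dε_d}`. -/
def Erays (d D : ℕ) : Set (Fin d → ℕ) :=
  insert 0 (Set.range fun i : Fin d => Pi.single i D)

/-- `A ⊆ ℕ^d` is of one-singular-point type for `D` and `e`: every `a ∈ A` satisfies
`|a| ≤ D` and `e ∣ |a|`, and `A` contains `0`, the vectors `(D-1)εᵢ + εⱼ` for all `i, j`,
and the vectors `(D-e)εᵢ` for all `i`. -/
def OneSingType (d D e : ℕ) (A : Set (Fin d → ℕ)) : Prop :=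
  (∀ a ∈ A, ∑ j, a j ≤ D ∧ e ∣ ∑ j, a j) ∧
  (0 : Fin d → ℕ) ∈ A ∧
  (∀ i j : Fin d, Pi.single i (D - 1) + Pi.single j 1 ∈ A) ∧
  (∀ i : Fin d, Pi.single i (D - e) ∈ A)

theorem aux_sumset_eq {M : Type*} [AddMonoid M] (A : Set M) (s : ℕ) : sumset A s = s • A := by
  induction s with
  | zero => rw [sumset, zero_nsmul, Set.singleton_zero]
  | succ n ih => rw [sumset, ih, succ_nsmul']

theorem aux_add {M : Type*} [AddMonoid M] {A : Set M} {a b : ℕ} {x y : M}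
    (hx : x ∈ a • A) (hy : y ∈ b • A) : x + y ∈ (a + b) • A := by
  rw [add_nsmul]; exact Set.add_mem_add hx hy

theorem aux_mono {M : Type*} [AddMonoid M] {A : Set M} (h0 : (0 : M) ∈ A) {a b : ℕ} {x : M}
    (hx : x ∈ a • A) (hab : a ≤ b) : x ∈ b • A := by
  induction b, hab using Nat.le_induction with
  | base => exact hx
  | succ n hn ih =>
    have := aux_add ih (b := 1) (y := 0) (by simpa using h0)
    simpa using this

theorem aux_greedy {d : ℕ} (f : Fin d → ℕ) (n : ℕ) (h : n ≤ ∑ i, f i) :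
    ∃ w : Fin d → ℕ, ∑ i, w i = n ∧ ∀ i, w i ≤ f i := by
  induction n with
  | zero => exact ⟨0, by simp, by simp⟩
  | succ n ih =>
    obtain ⟨w, hw, hwf⟩ := ih (by omega)
    obtain ⟨i, -, hi⟩ : ∃ i ∈ Finset.univ, w i < f i :=
      Finset.exists_lt_of_sum_lt (by omega)
    refine ⟨w + Pi.single i 1, by simp [Finset.sum_add_distrib, hw], fun j => ?_⟩
    by_cases hj : j = i
    · subst hj; simp; omega
    · simp [hj, hwf j]

theorem aux_split {d : ℕ} (u : Fin d → ℕ) (n : ℕ) (h : ∑ i, u i = n + 1) :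
    ∃ (i : Fin d) (u' : Fin d → ℕ), u = u' + Pi.single i 1 ∧ ∑ i, u' i = n := by
  obtain ⟨i, -, hi⟩ : ∃ i ∈ Finset.univ, (0 : ℕ) < u i :=
    Finset.exists_lt_of_sum_lt (f := fun _ => 0) (by simp; omega)
  have hu : u = (u - Pi.single i 1) + Pi.single i 1 := by
    ext j
    by_cases hj : j = i
    · subst hj; simp; omega
    · simp [hj]
  refine ⟨i, u - Pi.single i 1, hu, ?_⟩
  have : ∑ j, u j = ∑ j, (u - Pi.single i 1 : Fin d → ℕ) j + 1 := by
    conv_lhs => rw [hu]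
    simp [Finset.sum_add_distrib]
  omega

theorem aux_single {d c : ℕ} {A : Set (Fin d → ℕ)} (h : ∀ i, Pi.single i c ∈ A) (n : ℕ) :
    ∀ w : Fin d → ℕ, ∑ i, w i = n → c • w ∈ n • A := by
  induction n with
  | zero =>
    intro w hw
    have : w = 0 := by ext i; simpa using (Finset.sum_eq_zero_iff.1 hw) i (Finset.mem_univ i)
    simp [this]
  | succ n ih =>
    intro w hw
    obtain ⟨i, w', rfl, hw'⟩ := aux_split w n hw
    have e1 : c • (Pi.single i 1 : Fin d → ℕ) = Pi.single i c := by
      rw [← Pi.single_smul]; simp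
    rw [smul_add, e1]
    exact aux_add (ih w' hw') (by simpa using h i)

theorem aux_pair {d c : ℕ} {A : Set (Fin d → ℕ)}
    (h : ∀ i j, Pi.single i c + Pi.single j 1 ∈ A) (n : ℕ) :
    ∀ u v : Fin d → ℕ, ∑ i, u i = n → ∑ i, v i = n → c • u + v ∈ n • A := by
  induction n with
  | zero =>
    intro w v hw hv
    have : w = 0 := by ext i; simpa using (Finset.sum_eq_zero_iff.1 hw) i (Finset.mem_univ i)
    have : v = 0 := by ext i; simpa using (Finset.sum_eq_zero_iff.1 hv) i (Finset.mem_univ i)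
    simp [*]
  | succ n ih =>
    intro w v hw hv
    obtain ⟨i, w', rfl, hw'⟩ := aux_split w n hw
    obtain ⟨j, v', rfl, hv'⟩ := aux_split v n hv
    have e1 : c • (Pi.single i 1 : Fin d → ℕ) = Pi.single i c := by
      rw [← Pi.single_smul]; simp
    rw [smul_add, e1, add_add_add_comm]
    exact aux_add (ih w' v' hw' hv') (by simpa using h i j)

theorem aux_divsum {d : ℕ} (y : Fin d → ℕ) (q : ℕ) :
    ∑ i, y i = q * ∑ i, y i / q + ∑ i, y i % q := by
  rw [Finset.mul_sum, ← Finset.sum_add_distrib]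
  exact Finset.sum_congr rfl fun i _ => (Nat.div_add_mod _ _).symm

theorem aux_modsum {d : ℕ} (y : Fin d → ℕ) (q : ℕ) (hq : 0 < q) :
    ∑ i, y i % q ≤ d * (q - 1) := by
  calc ∑ i, y i % q ≤ ∑ _i : Fin d, (q - 1) :=
        Finset.sum_le_sum fun i _ => by have := Nat.mod_lt (y i) hq; omega
    _ = d * (q - 1) := by simp

/-- extraction: remove `n` multiples of `q` -/
theorem aux_extract {d : ℕ} (y : Fin d → ℕ) (q n : ℕ) (h : n ≤ ∑ i, y i / q) :
    ∃ w v : Fin d → ℕ, ∑ i, w i = n ∧ y = q • w + v ∧ ∑ i, y i = q * n + ∑ i, v i := by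
  obtain ⟨w, hw, hwf⟩ := aux_greedy _ n h
  have hle : ∀ i, q * w i ≤ y i := fun i =>
    (Nat.mul_le_mul_left q (hwf i)).trans (Nat.mul_div_le _ _)
  have hy : y = q • w + (y - q • w) := by
    ext i; have := hle i; simp; omega
  refine ⟨w, y - q • w, hw, hy, ?_⟩
  conv_lhs => rw [hy]
  simp only [Pi.add_apply, Finset.sum_add_distrib, Pi.smul_apply, smul_eq_mul, ← Finset.mul_sum, hw]

theorem aux_B {d D : ℕ} (hd : 1 ≤ d) (hD : 3 ≤ D) {A : Set (Fin d → ℕ)}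
    (h : ∀ i j : Fin d, Pi.single i (D - 1) + Pi.single j 1 ∈ A) (s : ℕ)
    (hs : (D - 2) * (d - 1) ≤ s) (y : Fin d → ℕ) (hy : ∑ i, y i = s * D) : y ∈ s • A := by
  have h1 := aux_divsum y (D - 1)
  have h2 := aux_modsum y (D - 1) (by omega)
  obtain ⟨c, rfl⟩ : ∃ c, D = c + 2 := ⟨D - 2, by omega⟩
  obtain ⟨b, rfl⟩ : ∃ b, d = b + 1 := ⟨d - 1, by omega⟩
  simp only [Nat.add_sub_cancel, show c + 2 - 1 = c + 1 from rfl] at *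
  have hle : s ≤ ∑ i, y i / (c + 1) := by
    by_contra! hlt
    nlinarith
  obtain ⟨u, v, hu, hyy, hsum⟩ := aux_extract y (c + 1) s hle
  rw [hyy]
  exact aux_pair h s u v hu (by nlinarith)

theorem aux_main {d D e : ℕ} (hd : 1 ≤ d) (hD : 3 ≤ D) (he : 1 ≤ e)
    (hdvd : e ∣ D) (ht : 2 ≤ (D - 2) * (d - 1) + D / e)
    {A : Set (Fin d → ℕ)} (hA : OneSingType d D e A) (y : Fin d → ℕ) (hye : e ∣ ∑ i, y i)
    (hy : ((D - 2) * (d - 1) + D / e - 2) * D < ∑ i, y i) (s : ℕ) (hs : ∑ i, y i ≤ s * D) :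
    y ∈ s • A := by
  obtain ⟨-, h0, hB, hC⟩ := hA
  obtain ⟨k, rfl⟩ := hdvd
  rw [Nat.mul_div_cancel_left k (by omega)] at hy ht
  obtain ⟨m, hm⟩ := hye
  have hk : 1 ≤ k := by
    rcases Nat.eq_zero_or_pos k with h | h
    · subst h; omega
    · exact h
  set X := (e * k - 2) * (d - 1) with hX
  have hm1 : (X + k - 2) * k < m := by
    rw [hm] at hy
    have : e * ((X + k - 2) * k) < e * m := by
      calc _ = (X + k - 2) * (e * k) := by ring
        _ < _ := hy
    exact Nat.lt_of_mul_lt_mul_left this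
  have hm2 : m ≤ s * k := by
    rw [hm] at hs
    have : e * m ≤ e * (s * k) := by
      calc _ ≤ s * (e * k) := hs
        _ = _ := by ring
    exact Nat.le_of_mul_le_mul_left this he
  -- the level
  obtain ⟨t, n, htn, hnk⟩ : ∃ t n, t * k = m + n ∧ n < k := by
    refine ⟨(m + (k - 1)) / k, k - 1 - (m + (k - 1)) % k, ?_, by omega⟩
    have := Nat.div_add_mod (m + (k - 1)) k
    have := Nat.mod_lt (m + (k - 1)) hk
    rw [mul_comm]; omega
  have ht1 : X + k - 2 < t := by
    have : (X + k - 2) * k < t * k := by omega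
    exact Nat.lt_of_mul_lt_mul_right this
  have ht2 : t ≤ s := by
    by_contra! hlt
    have : (s + 1) * k ≤ t * k := Nat.mul_le_mul_right k hlt
    nlinarith
  obtain ⟨r, hr⟩ : ∃ r, t = r + n := ⟨t - n, by omega⟩
  have hrX : X ≤ r := by omega
  have hsum : ∑ i, y i = r * (e * k) + n * (e * k - e) := by
    rw [hm]
    obtain ⟨j, rfl⟩ : ∃ j, k = j + 1 := ⟨k - 1, by omega⟩
    have : e * (j + 1) - e = e * j := by rw [mul_add]; omega
    rw [this]
    subst hr
    have : m = r * (j + 1) + n * j := by nlinarith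
    rw [this]; ring
  have hle : n ≤ ∑ i, y i / (e * k - e) := by
    rcases Nat.eq_zero_or_pos n with hn | hn
    · omega
    have hpos : 0 < e * k - e := by
      have : e * 2 ≤ e * k := Nat.mul_le_mul_left e (by omega)
      omega
    have h1 := aux_divsum y (e * k - e)
    have h2 := aux_modsum y (e * k - e) hpos
    by_contra! hlt
    obtain ⟨q, hq⟩ : ∃ q, e * k - e = q + 1 := ⟨e * k - e - 1, by omega⟩
    obtain ⟨b, rfl⟩ : ∃ b, d = b + 1 := ⟨d - 1, by omega⟩
    rw [hq] at h1 h2 hlt hsum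
    simp only [Nat.add_sub_cancel] at h2 hX
    have h3 : (q + 1) * (∑ i, y i / (q + 1) + 1) ≤ (q + 1) * n := Nat.mul_le_mul_left _ hlt
    have h4 : q * b ≤ X * (e * k) := by
      have a1 : 1 * b ≤ (e * k - 2) * b := Nat.mul_le_mul_right b (by omega)
      calc q * b ≤ (e * k) * X := Nat.mul_le_mul (by omega) (by omega)
        _ = _ := mul_comm _ _
    have h5 : X * (e * k) ≤ r * (e * k) := Nat.mul_le_mul_right _ hrX
    nlinarith
  obtain ⟨w, v, hw, hyy, hs2⟩ := aux_extract y _ n hle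
  have hv : ∑ i, v i = r * (e * k) := by
    rw [mul_comm (e * k - e) n] at hs2; omega
  refine aux_mono h0 (a := n + r) ?_ (by omega)
  rw [hyy]
  exact aux_add (aux_single hC n w hw) (aux_B hd hD hB r hrX v hv)

theorem aux_closure {d D e : ℕ} {A : Set (Fin d → ℕ)} (hA : OneSingType d D e A)
    (y : Fin d → ℕ) (hy : y ∈ AddSubmonoid.closure A) :
    ∃ n, e * n ≤ ∑ i, y i ∧ y ∈ n • A := by
  induction hy using AddSubmonoid.closure_induction with
  | mem a ha =>
    rcases Nat.eq_zero_or_pos (∑ i, a i) with h | h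
    · have : a = 0 := by ext i; simpa using (Finset.sum_eq_zero_iff.1 h) i (Finset.mem_univ i)
      exact ⟨0, by simp, by simp [this]⟩
    · exact ⟨1, by simpa using Nat.le_of_dvd h (hA.1 a ha).2, by simpa using ha⟩
  | zero => exact ⟨0, by simp, by simp⟩
  | add x y _ _ hx hy =>
    obtain ⟨a, ha, hxa⟩ := hx
    obtain ⟨b, hb, hyb⟩ := hy
    refine ⟨a + b, ?_, aux_add hxa hyb⟩
    simp only [Pi.add_apply, Finset.sum_add_distrib]
    rw [mul_add]; omega

theorem aux_mem {d D e : ℕ} {A : Set (Fin d → ℕ)} (hA : OneSingType d D e A) (s : ℕ) :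
    ∀ y ∈ s • A, (e ∣ ∑ i, y i) ∧ ∑ i, y i ≤ s * D ∧ y ∈ AddSubmonoid.closure A := by
  induction s with
  | zero => intro y hy; simp at hy; subst hy; simp
  | succ n ih =>
    intro y hy
    rw [succ_nsmul] at hy
    obtain ⟨x, hx, a, ha, rfl⟩ := Set.mem_add.1 hy
    obtain ⟨h1, h2, h3⟩ := ih x hx
    obtain ⟨h4, h5⟩ := hA.1 a ha
    simp only [Pi.add_apply, Finset.sum_add_distrib]
    refine ⟨dvd_add h1 h5, by rw [add_mul]; omega, add_mem h3 (AddSubmonoid.subset_closure ha)⟩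

theorem stmt_9 (d D e : ℕ) (hd : 1 ≤ d) (hD : 3 ≤ D) (he : 1 ≤ e) (heD : e ≤ D)
    (hdvd : e ∣ D) (ht : 2 ≤ (D - 2) * (d - 1) + D / e)
    (A : Set (Fin d → ℕ)) (hA : OneSingType d D e A) :
    Holes d e A ⊆ DeltaE d D e ((D - 2) * (d - 1) + D / e - 2) ∧
    ∀ s : ℕ, (D / e) * ((D - 2) * (d - 1) + D / e - 2) ≤ s →
      sumset A s = DeltaE d D e s \ Holes d e A := by
  refine ⟨?_, ?_⟩
  · rintro y ⟨hye, hyn⟩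
    refine ⟨hye, ?_⟩
    by_contra! hlt
    refine hyn (aux_mem hA (∑ i, y i) y ?_).2.2
    exact aux_main hd hD he hdvd ht hA y hye hlt _ (Nat.le_mul_of_pos_right _ (by omega))
  · intro s hs
    rw [aux_sumset_eq]
    ext y
    constructor
    · intro hy
      obtain ⟨h1, h2, h3⟩ := aux_mem hA s y hy
      exact ⟨⟨h1, h2⟩, fun h => h.2 h3⟩
    · rintro ⟨⟨h1, h2⟩, h3⟩
      have hcl : y ∈ AddSubmonoid.closure A := by
        by_contra h
        exact h3 ⟨h1, h⟩
      by_cases hlt : ((D - 2) * (d - 1) + D / e - 2) * D < ∑ i, y i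
      · exact aux_main hd hD he hdvd ht hA y h1 hlt s h2
      · obtain ⟨n, hn, hyn⟩ := aux_closure hA y hcl
        refine aux_mono hA.2.1 hyn (le_trans ?_ hs)
        have hk : e * (D / e) = D := Nat.mul_div_cancel' hdvd
        refine le_of_mul_le_mul_left (a := e) ?_ he
        rw [← mul_assoc, hk, mul_comm D]
        omega
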